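/- In the max-variant with k = 2 facilities, there exists a strategyproof two-phase mechanism whose approximation ratio is at most 9/2; that is, on every instance its output has social cost at most 9/2 times the minimum social cost over all feasible solutions. -/

import Mathlib

open Finset

noncomputable section

/-- A distributed facility location setting for `k` facilities and `m` groups:
`n ≥ 2` agents on the real line, partitioned into `m ≥ k` disjoint nonempty groups. -/
structure FLSetting (k m : ℕ) where
  n : ℕ
  hn : 2 ≤ n
  hmk : k ≤ m
  grp : Fin n → Fin m
  surj : Function.Surjective grp

/-- A two-phase mechanism for `k` facilities: for each number `m` of groups, a
representative function on finite multisets of reals, and a selection function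
producing the `k` facility locations from the multiset of representatives. -/
structure TwoPhase (k : ℕ) where
  rep : ℕ → Multiset ℝ → ℝ
  sel : ℕ → Multiset ℝ → Fin k → ℝ

/-- Validity of a two-phase mechanism: the representative of a nonempty multiset
is one of its elements, and the selected facility locations form a sub-multiset
of the representatives. -/
def TwoPhase.Valid {k : ℕ} (M : TwoPhase k) : Prop :=
  (∀ (m : ℕ) (S : Multiset ℝ), S ≠ 0 → M.rep m S ∈ S) ∧
  (∀ (m : ℕ) (R : Multiset ℝ), Multiset.card R = m → k ≤ m →
    (↑(List.ofFn (M.sel m R)) : Multiset ℝ) ≤ R)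

/-- The multiset of (reported) positions of the agents in group `j`. -/
def groupMS {k m : ℕ} (S : FLSetting k m) (x : Fin S.n → ℝ) (j : Fin m) : Multiset ℝ :=
  (Finset.univ.filter (fun i => S.grp i = j)).val.map x

/-- The number of agents in group `j`. -/
def groupSize {k m : ℕ} (S : FLSetting k m) (j : Fin m) : ℕ :=
  (Finset.univ.filter (fun i => S.grp i = j)).card

/-- The multiset of the `m` group representatives. -/
def repsMS {k m : ℕ} (M : TwoPhase k) (S : FLSetting k m) (x : Fin S.n → ℝ) : Multiset ℝ :=
  (Finset.univ.val.map fun j : Fin m => M.rep m (groupMS S x j))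

/-- The facility locations output by mechanism `M` on reported positions `x`. -/
def outcome {k m : ℕ} (M : TwoPhase k) (S : FLSetting k m) (x : Fin S.n → ℝ) : Fin k → ℝ :=
  M.sel m (repsMS M S x)

/-- Sum-variant individual cost: total distance to all facilities. -/
def sumCost (k : ℕ) (xi : ℝ) (y : Fin k → ℝ) : ℝ := ∑ ℓ, |xi - y ℓ|

/-- Max-variant individual cost: distance to the farthest facility. -/
def maxCost (k : ℕ) (xi : ℝ) (y : Fin k → ℝ) : ℝ := ⨆ ℓ, |xi - y ℓ|

/-- Social cost: average over groups of the average individual cost within the group. -/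
def SC {k m : ℕ} (cost : ℝ → (Fin k → ℝ) → ℝ) (S : FLSetting k m) (x : Fin S.n → ℝ)
    (y : Fin k → ℝ) : ℝ :=
  (1 / (m : ℝ)) * ∑ j : Fin m,
    (1 / (groupSize S j : ℝ)) *
      ∑ i ∈ Finset.univ.filter (fun i => S.grp i = j), cost (x i) y

/-- A feasible solution opens the `k` facilities at the positions of `k` distinct agents. -/
def Feasible {k m : ℕ} (S : FLSetting k m) (x : Fin S.n → ℝ) (y : Fin k → ℝ) : Prop :=
  ∃ f : Fin k → Fin S.n, Function.Injective f ∧ ∀ ℓ, y ℓ = x (f ℓ)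

/-- Strategyproofness with respect to an individual cost function. -/
def Strategyproof {k : ℕ} (cost : ℝ → (Fin k → ℝ) → ℝ) (M : TwoPhase k) : Prop :=
  ∀ (m : ℕ) (S : FLSetting k m) (x : Fin S.n → ℝ) (i : Fin S.n) (x' : ℝ),
    cost (x i) (outcome M S x) ≤ cost (x i) (outcome M S (Function.update x i x'))

/-- Strategyproofness restricted to instances with exactly `m` groups. -/
def StrategyproofOn {k : ℕ} (cost : ℝ → (Fin k → ℝ) → ℝ) (M : TwoPhase k) (m : ℕ) : Prop :=
  ∀ (S : FLSetting k m) (x : Fin S.n → ℝ) (i : Fin S.n) (x' : ℝ),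
    cost (x i) (outcome M S x) ≤ cost (x i) (outcome M S (Function.update x i x'))

/-- The `t`-th leftmost element of a multiset of reals (1-indexed). -/
def kthLeftmost (S : Multiset ℝ) (t : ℕ) : ℝ := (S.sort (· ≤ ·)).getD (t - 1) 0

/-- The mechanism `M_m(θ, ℓ, r)` for two facilities: each group's representative is the
position of its `⌈θ·n_g⌉`-th leftmost agent, and the facilities are opened at the
`⌈ℓm⌉`-th and `⌈rm⌉`-th leftmost representative locations. -/
def Mmech (θ l r : ℝ) : TwoPhase 2 where
  rep := fun _ S => kthLeftmost S ⌈θ * (Multiset.card S : ℝ)⌉₊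
  sel := fun m R => ![kthLeftmost R ⌈l * (m : ℝ)⌉₊, kthLeftmost R ⌈r * (m : ℝ)⌉₊]

/-! ### Order statistics -/

theorem getElem_iff_lt_countP_of_pairwise_le {L : List ℝ} (hL : L.Pairwise (· ≤ ·))
    (P : ℝ → Prop) [DecidablePred P] (hP : ∀ a b, a ≤ b → P b → P a)
    (k : ℕ) (hk : k < L.length) : P L[k] ↔ k < L.countP (fun a => decide (P a)) := by
  induction L generalizing k with
  | nil => simp at hk
  | cons a L ih =>
    rw [List.pairwise_cons] at hL
    obtain ⟨ha, hL⟩ := hL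
    by_cases hPa : P a
    · cases k with
      | zero => simp [hPa]
      | succ k =>
        have := ih hL k (by simpa using hk)
        simp [hPa, this]
    · have hall : ∀ b ∈ L, ¬ P b := fun b hb hPb => hPa (hP a b (ha b hb) hPb)
      have h0 : L.countP (fun a => decide (P a)) = 0 := by
        rw [List.countP_eq_zero]
        simpa using hall
      cases k with
      | zero => simp [hPa, h0]
      | succ k =>
        have hk' : k < L.length := by simpa using hk
        have := hall L[k] (List.getElem_mem hk')
        simp [hPa, h0, this]

theorem kthLeftmost_eq_getElem (S : Multiset ℝ) (t : ℕ)
    (ht : t - 1 < (S.sort (· ≤ ·)).length) :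
    kthLeftmost S t = (S.sort (· ≤ ·))[t - 1] := by
  simp [kthLeftmost, List.getD_eq_getElem?_getD, List.getElem?_eq_getElem ht]

theorem kthLeftmost_mem {S : Multiset ℝ} (hS : S ≠ 0) {t : ℕ} (ht : t ≤ S.card) :
    kthLeftmost S t ∈ S := by
  have hpos : 0 < S.card := Multiset.card_pos.2 hS
  rw [kthLeftmost_eq_getElem S t (by rw [Multiset.length_sort]; omega)]
  exact (Multiset.mem_sort (· ≤ ·)).1 (List.getElem_mem _)

theorem pair_kthLeftmost_le {S : Multiset ℝ} {t : ℕ} (h1 : 1 ≤ t) (ht : t + 1 ≤ S.card) :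
    (↑[kthLeftmost S t, kthLeftmost S (t + 1)] : Multiset ℝ) ≤ S := by
  have hlen : (S.sort (· ≤ ·)).length = S.card := Multiset.length_sort _
  rw [kthLeftmost_eq_getElem S t (by omega), kthLeftmost_eq_getElem S (t + 1) (by omega)]
  conv_rhs => rw [← Multiset.sort_eq S (· ≤ ·)]
  rw [Multiset.coe_le]
  apply List.Sublist.subperm
  have h := List.drop_sublist (t - 1) (S.sort (· ≤ ·))
  rw [List.drop_eq_getElem_cons (by omega), List.drop_eq_getElem_cons (by omega)] at h
  refine List.Sublist.trans ?_ h
  simp only [show t - 1 + 1 = t + 1 - 1 by omega]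
  exact ((List.nil_sublist _).cons_cons _).cons_cons _

section Family

variable {ι : Type*} {s : Finset ι} {x x' : ι → ℝ} {t : ℕ}

theorem kthLeftmost_map_iff (P : ℝ → Prop) [DecidablePred P]
    (hP : ∀ a b, a ≤ b → P b → P a) (h1 : 1 ≤ t) (ht : t ≤ s.card) :
    P (kthLeftmost (s.val.map x) t) ↔ t ≤ (s.filter fun i => P (x i)).card := by
  have hlen : ((s.val.map x).sort (· ≤ ·)).length = s.card := by simp
  rw [kthLeftmost_eq_getElem _ t (by omega),
    getElem_iff_lt_countP_of_pairwise_le (Multiset.pairwise_sort _ _) P hP]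
  have : ((s.val.map x).sort (· ≤ ·)).countP (fun a => decide (P a))
      = (s.filter fun i => P (x i)).card := by
    rw [← Multiset.coe_countP, Multiset.sort_eq, Multiset.countP_map]
    rfl
  rw [this]
  omega

theorem kthLeftmost_map_le_iff (z : ℝ) (h1 : 1 ≤ t) (ht : t ≤ s.card) :
    kthLeftmost (s.val.map x) t ≤ z ↔ t ≤ (s.filter fun i => x i ≤ z).card :=
  kthLeftmost_map_iff (· ≤ z) (fun _ _ hab hb => hab.trans hb) h1 ht

theorem kthLeftmost_map_lt_iff (z : ℝ) (h1 : 1 ≤ t) (ht : t ≤ s.card) :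
    kthLeftmost (s.val.map x) t < z ↔ t ≤ (s.filter fun i => x i < z).card :=
  kthLeftmost_map_iff (· < z) (fun _ _ hab hb => hab.trans_lt hb) h1 ht

theorem le_card_filter_le_kthLeftmost (h1 : 1 ≤ t) (ht : t ≤ s.card) :
    t ≤ (s.filter fun i => x i ≤ kthLeftmost (s.val.map x) t).card :=
  (kthLeftmost_map_le_iff _ h1 ht).1 le_rfl

theorem card_lt_card_filter_kthLeftmost_le_add (h1 : 1 ≤ t) (ht : t ≤ s.card) :
    s.card < (s.filter fun i => kthLeftmost (s.val.map x) t ≤ x i).card + t := by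
  have h := mt (kthLeftmost_map_lt_iff (x := x) (kthLeftmost (s.val.map x) t) h1 ht).2
    (lt_irrefl _)
  have h2 := Finset.card_filter_add_card_filter_not (s := s)
    (fun i => x i < kthLeftmost (s.val.map x) t)
  simp only [not_lt] at h h2
  omega

theorem kthLeftmost_map_mono (h : ∀ i ∈ s, x i ≤ x' i) (h1 : 1 ≤ t) (ht : t ≤ s.card) :
    kthLeftmost (s.val.map x) t ≤ kthLeftmost (s.val.map x') t := by
  rw [kthLeftmost_map_le_iff _ h1 ht]
  refine (le_card_filter_le_kthLeftmost (x := x') h1 ht).trans (Finset.card_le_card ?_)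
  intro i hi
  rw [Finset.mem_filter] at hi ⊢
  exact ⟨hi.1, (h i hi.1).trans hi.2⟩

/-- If one entry of a family moves away from `p`, every order statistic moves (weakly)
away from `p`. -/
theorem kthLeftmost_map_mem_uIcc {p : ℝ} {i : ι} (hne : ∀ j ∈ s, j ≠ i → x j = x' j)
    (hi : x i ∈ Set.uIcc p (x' i)) (h1 : 1 ≤ t) (ht : t ≤ s.card) :
    kthLeftmost (s.val.map x) t ∈ Set.uIcc p (kthLeftmost (s.val.map x') t) := by
  rw [Set.mem_uIcc] at hi ⊢
  rcases hi with ⟨hp, hx⟩ | ⟨hx, hp⟩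
  · have hmono : kthLeftmost (s.val.map x) t ≤ kthLeftmost (s.val.map x') t := by
      refine kthLeftmost_map_mono (fun j hj => ?_) h1 ht
      by_cases hji : j = i
      · rwa [hji]
      · exact (hne j hj hji).le
    rcases le_or_gt p (kthLeftmost (s.val.map x) t) with hpv | hpv
    · exact Or.inl ⟨hpv, hmono⟩
    · refine Or.inr ⟨?_, hpv.le⟩
      rw [kthLeftmost_map_le_iff _ h1 ht]
      refine (le_card_filter_le_kthLeftmost (x := x) h1 ht).trans (Finset.card_le_card ?_)
      intro j hj
      rw [Finset.mem_filter] at hj ⊢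
      have hji : j ≠ i := by
        rintro rfl
        linarith [hj.2]
      exact ⟨hj.1, (hne j hj.1 hji) ▸ hj.2⟩
  · have hmono : kthLeftmost (s.val.map x') t ≤ kthLeftmost (s.val.map x) t := by
      refine kthLeftmost_map_mono (fun j hj => ?_) h1 ht
      by_cases hji : j = i
      · rwa [hji]
      · exact (hne j hj hji).ge
    rcases le_or_gt (kthLeftmost (s.val.map x) t) p with hpv | hpv
    · exact Or.inr ⟨hmono, hpv⟩
    · refine Or.inl ⟨hpv.le, ?_⟩
      by_contra! hlt
      rw [kthLeftmost_map_lt_iff _ h1 ht] at hlt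
      refine (lt_irrefl (kthLeftmost (s.val.map x) t)) ?_
      refine (kthLeftmost_map_lt_iff _ h1 ht).2 (hlt.trans (Finset.card_le_card ?_))
      intro j hj
      rw [Finset.mem_filter] at hj ⊢
      refine ⟨hj.1, ?_⟩
      by_cases hji : j = i
      · rw [hji]
        linarith
      · exact (hne j hj.1 hji) ▸ hj.2

end Family

/-! ### Costs -/

theorem maxCost_two (a : ℝ) (y : Fin 2 → ℝ) :
    maxCost 2 a y = max |a - y 0| |a - y 1| := by
  apply le_antisymm
  · refine ciSup_le fun ℓ => ?_
    fin_cases ℓ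
    · exact le_max_left _ _
    · exact le_max_right _ _
  · have hb : BddAbove (Set.range fun ℓ => |a - y ℓ|) := (Set.finite_range _).bddAbove
    exact max_le (le_ciSup hb 0) (le_ciSup hb 1)

theorem abs_sub_midpoint_le_maxCost_two (a : ℝ) (y : Fin 2 → ℝ) :
    |a - (y 0 + y 1) / 2| ≤ maxCost 2 a y := by
  rw [maxCost_two]
  have h0 := le_max_left |a - y 0| |a - y 1|
  have h1 := le_max_right |a - y 0| |a - y 1|
  rw [abs_le]
  constructor <;>
    linarith [le_abs_self (a - y 0), le_abs_self (a - y 1), neg_abs_le (a - y 0),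
      neg_abs_le (a - y 1)]

theorem abs_sub_le_abs_sub_of_mem_uIcc {p v v' : ℝ} (h : v ∈ Set.uIcc p v') :
    |p - v| ≤ |p - v'| := by
  rcases Set.mem_uIcc.1 h with h | h
  · rw [abs_sub_comm p v, abs_sub_comm p v', abs_of_nonneg (by linarith),
      abs_of_nonneg (by linarith)]
    linarith
  · rw [abs_of_nonneg (by linarith), abs_of_nonneg (by linarith)]
    linarith

section Weighted

variable {ι : Type*} {s : Finset ι} {w x : ι → ℝ} {a b c : ℝ}

theorem sum_mul_max_abs_le_of_midpoint_ge (hw : ∀ i ∈ s, 0 ≤ w i) (hw1 : ∑ i ∈ s, w i = 1)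
    (hab : a ≤ b) (hc : c - a ≤ b - c)
    (hb : 2 / 9 ≤ ∑ i ∈ s, w i * if b ≤ x i then 1 else 0)
    (ha : 2 / 9 ≤ ∑ i ∈ s, w i * if x i ≤ a then 1 else 0) :
    ∑ i ∈ s, w i * max |x i - a| |x i - b| ≤ 9 / 2 * ∑ i ∈ s, w i * |x i - c| := by
  set d := max (c - a) 0 with hd
  have hd0 : 0 ≤ d := le_max_right _ _
  have hda : c - a ≤ d := le_max_left _ _
  have hdb : d ≤ b - c := max_le hc (by linarith)
  have hdcase : d = c - a ∨ d = 0 := max_choice _ _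
  have hpt : ∀ i ∈ s, w i * max |x i - a| |x i - b| ≤
      9 / 2 * (w i * |x i - c|) + (b - c) * w i
        - (9 / 2 * (b - c) - d) * (w i * if b ≤ x i then 1 else 0)
        - 7 / 2 * d * (w i * if x i ≤ a then 1 else 0) := by
    intro i hi
    have key : max |x i - a| |x i - b| ≤ 9 / 2 * |x i - c| + (b - c)
        - (9 / 2 * (b - c) - d) * (if b ≤ x i then 1 else 0)
        - 7 / 2 * d * (if x i ≤ a then 1 else 0) := by
      have e1 := le_abs_self (x i - c)
      have e2 := neg_abs_le (x i - c)
      split_ifs with h1 h2 h2 <;>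
      refine max_le (abs_le.2 ⟨?_, ?_⟩) (abs_le.2 ⟨?_, ?_⟩) <;>
      rcases hdcase with h | h <;> nlinarith
    have := mul_le_mul_of_nonneg_left key (hw i hi)
    linarith
  have hsum := Finset.sum_le_sum hpt
  rw [Finset.sum_sub_distrib, Finset.sum_sub_distrib, Finset.sum_add_distrib,
    ← Finset.mul_sum, ← Finset.mul_sum, ← Finset.mul_sum, ← Finset.mul_sum, hw1] at hsum
  have k1 := mul_le_mul_of_nonneg_left hb (show 0 ≤ 9 / 2 * (b - c) - d by linarith)
  have k2 := mul_le_mul_of_nonneg_left ha (show 0 ≤ 7 / 2 * d by linarith)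
  linarith

/-- If weight at least `2/9` lies on each side of `[a, b]`, the average distance to the farther
of `a` and `b` is at most `9/2` times the average distance to any point. -/
theorem sum_mul_max_abs_le (hw : ∀ i ∈ s, 0 ≤ w i) (hw1 : ∑ i ∈ s, w i = 1) (hab : a ≤ b)
    (hb : 2 / 9 ≤ ∑ i ∈ s, w i * if b ≤ x i then 1 else 0)
    (ha : 2 / 9 ≤ ∑ i ∈ s, w i * if x i ≤ a then 1 else 0) :
    ∑ i ∈ s, w i * max |x i - a| |x i - b| ≤ 9 / 2 * ∑ i ∈ s, w i * |x i - c| := by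
  rcases le_total (c - a) (b - c) with hc | hc
  · exact sum_mul_max_abs_le_of_midpoint_ge hw hw1 hab hc hb ha
  · have := sum_mul_max_abs_le_of_midpoint_ge (x := fun i => -x i) (a := -b) (b := -a)
      (c := -c) hw hw1 (by linarith) (by linarith) (by simpa using ha) (by simpa using hb)
    have habs : ∀ u v : ℝ, |-u - -v| = |u - v| := fun u v => by
      rw [← abs_neg]
      congr 1
      ring
    simp only [habs] at this
    simpa only [max_comm |_ - a|] using this

end Weighted

/-! ### The mechanism -/

/-- The mechanism with `⌊(m+1)/2⌋ =: l`: groups are represented by their `(m - l)/m`-quantile, and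
the `l`-th and `(l+1)`-th leftmost representatives are selected. -/
def medianPairMech : TwoPhase 2 where
  rep := fun m S => kthLeftmost S
    ⌈(1 - (((m + 1) / 2 : ℕ) : ℝ) / (m : ℝ)) * (Multiset.card S : ℝ)⌉₊
  sel := fun m R => ![kthLeftmost R ((m + 1) / 2), kthLeftmost R ((m + 1) / 2 + 1)]

theorem medianPairMech_ratio_nonneg (m : ℕ) : 0 ≤ (((m + 1) / 2 : ℕ) : ℝ) / (m : ℝ) := by
  positivity

theorem medianPairMech_ratio_lt_one {m : ℕ} (hm : 2 ≤ m) :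
    (((m + 1) / 2 : ℕ) : ℝ) / (m : ℝ) < 1 := by
  rw [div_lt_one (by positivity)]
  exact_mod_cast (show (m + 1) / 2 < m by omega)

theorem medianPairMech_ratio_mul {m : ℕ} (hm : 2 ≤ m) :
    2 / 9 ≤ (((m + 1) / 2 : ℕ) : ℝ) / (m : ℝ) * (1 - (((m + 1) / 2 : ℕ) : ℝ) / (m : ℝ)) := by
  have hm0 : (0 : ℝ) < m := by positivity
  have key : 2 * (m : ℝ) ^ 2 ≤
      9 * ((((m + 1) / 2 : ℕ) : ℝ) * ((m : ℝ) - (((m + 1) / 2 : ℕ) : ℝ))) := by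
    rcases Nat.even_or_odd' m with ⟨q, rfl | rfl⟩
    · rw [show (2 * q + 1) / 2 = q by omega]
      push_cast
      nlinarith [sq_nonneg (q : ℝ)]
    · rw [show (2 * q + 1 + 1) / 2 = q + 1 by omega]
      have hq : (1 : ℝ) ≤ q := by exact_mod_cast (show 1 ≤ q by omega)
      push_cast
      nlinarith
  rw [show (((m + 1) / 2 : ℕ) : ℝ) / (m : ℝ) * (1 - (((m + 1) / 2 : ℕ) : ℝ) / (m : ℝ))
    = ((((m + 1) / 2 : ℕ) : ℝ) * ((m : ℝ) - (((m + 1) / 2 : ℕ) : ℝ))) / (m : ℝ) ^ 2 by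
      field_simp]
  rw [le_div_iff₀ (by positivity)]
  linarith

theorem ceil_ratio_mul_le {θ : ℝ} (hθ : 0 ≤ θ) (n : ℕ) : ⌈(1 - θ) * (n : ℝ)⌉₊ ≤ n := by
  rw [Nat.ceil_le]
  nlinarith [(Nat.cast_nonneg n : (0 : ℝ) ≤ n)]

theorem one_le_ceil_ratio_mul {θ : ℝ} (hθ : θ < 1) {n : ℕ} (hn : 0 < n) :
    1 ≤ ⌈(1 - θ) * (n : ℝ)⌉₊ := by
  rw [Nat.one_le_ceil_iff]
  have : (0 : ℝ) < n := by exact_mod_cast hn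
  have : 0 < 1 - θ := by linarith
  positivity

theorem medianPairMech_valid : medianPairMech.Valid := by
  refine ⟨fun m S hS => ?_, fun m R hR hm => ?_⟩
  · exact kthLeftmost_mem hS (ceil_ratio_mul_le (medianPairMech_ratio_nonneg m) _)
  · have : List.ofFn (medianPairMech.sel m R)
        = [kthLeftmost R ((m + 1) / 2), kthLeftmost R ((m + 1) / 2 + 1)] := by
      simp [medianPairMech, List.ofFn_succ]
    rw [this]
    exact pair_kthLeftmost_le (by omega) (by omega)

theorem groupSize_pos {k m : ℕ} (S : FLSetting k m) (j : Fin m) : 0 < groupSize S j := by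
  obtain ⟨i, hi⟩ := S.surj j
  exact Finset.card_pos.2 ⟨i, by simp [hi]⟩

theorem medianPairMech_rep_groupMS {m : ℕ} (S : FLSetting 2 m) (x : Fin S.n → ℝ) (j : Fin m) :
    medianPairMech.rep m (groupMS S x j) = kthLeftmost
      ((Finset.univ.filter (fun i => S.grp i = j)).val.map x)
      ⌈(1 - (((m + 1) / 2 : ℕ) : ℝ) / (m : ℝ)) * (groupSize S j : ℝ)⌉₊ := by
  simp only [medianPairMech, groupMS, groupSize, Multiset.card_map, Finset.card_val]

theorem medianPairMech_strategyproof : Strategyproof (maxCost 2) medianPairMech := by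
  intro m S x i a
  have hm : 2 ≤ m := S.hmk
  have hrep : medianPairMech.rep m (groupMS S x (S.grp i)) ∈ Set.uIcc (x i)
      (medianPairMech.rep m (groupMS S (Function.update x i a) (S.grp i))) := by
    rw [medianPairMech_rep_groupMS, medianPairMech_rep_groupMS]
    refine kthLeftmost_map_mem_uIcc (i := i) (fun j _ hji => ?_) Set.left_mem_uIcc
      (one_le_ceil_ratio_mul (medianPairMech_ratio_lt_one hm) (groupSize_pos S _))
      (ceil_ratio_mul_le (medianPairMech_ratio_nonneg m) _)
    rw [Function.update_of_ne hji]
  have hother : ∀ j ∈ (Finset.univ : Finset (Fin m)), j ≠ S.grp i →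
      medianPairMech.rep m (groupMS S x j)
        = medianPairMech.rep m (groupMS S (Function.update x i a) j) := by
    intro j _ hj
    congr 1
    refine Multiset.map_congr rfl fun i' hi' => ?_
    have hgrp : S.grp i' = j := by simpa using hi'
    rw [Function.update_of_ne]
    rintro rfl
    exact hj hgrp.symm
  rw [maxCost_two, maxCost_two]
  refine max_le_max (abs_sub_le_abs_sub_of_mem_uIcc ?_) (abs_sub_le_abs_sub_of_mem_uIcc ?_)
  · exact kthLeftmost_map_mem_uIcc hother hrep (by omega) (by simp; omega)
  · exact kthLeftmost_map_mem_uIcc hother hrep (by omega) (by simp; omega)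

/-! ### Approximation ratio -/

/-- The weight of an agent in the social cost. -/
def agentWeight {k m : ℕ} (S : FLSetting k m) (i : Fin S.n) : ℝ :=
  1 / (m : ℝ) * (1 / (groupSize S (S.grp i) : ℝ))

theorem sum_agentWeight_mul {k m : ℕ} (S : FLSetting k m) (f : Fin S.n → ℝ) :
    ∑ i, agentWeight S i * f i = (1 / (m : ℝ)) * ∑ j : Fin m, (1 / (groupSize S j : ℝ)) *
      ∑ i ∈ Finset.univ.filter (fun i => S.grp i = j), f i := by
  rw [← Finset.sum_fiberwise Finset.univ S.grp, Finset.mul_sum]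
  refine Finset.sum_congr rfl fun j _ => ?_
  rw [Finset.mul_sum, Finset.mul_sum]
  refine Finset.sum_congr rfl fun i hi => ?_
  rw [agentWeight, (Finset.mem_filter.1 hi).2]
  ring

theorem sum_agentWeight {k m : ℕ} (hm : 0 < m) (S : FLSetting k m) :
    ∑ i, agentWeight S i = 1 := by
  have h := sum_agentWeight_mul S (fun _ => 1)
  simp only [mul_one] at h
  have hgroup : ∀ j : Fin m, (1 / (groupSize S j : ℝ)) *
      ∑ i ∈ Finset.univ.filter (fun i => S.grp i = j), (1 : ℝ) = 1 := fun j => by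
    have : (groupSize S j : ℝ) ≠ 0 := by exact_mod_cast (groupSize_pos S j).ne'
    rw [Finset.sum_const, nsmul_eq_mul, mul_one]
    exact one_div_mul_cancel this
  have hm' : (m : ℝ) ≠ 0 := by positivity
  rw [h, Finset.sum_congr rfl fun j _ => hgroup j]
  simp [hm']

/-- If a fraction `α` of the groups each have a fraction `β` of their agents satisfying `P`, the
agents satisfying `P` have total weight at least `α * β`. -/
theorem mul_le_sum_agentWeight_ite {k m : ℕ} (hm : 0 < m) (S : FLSetting k m)
    (P : Fin S.n → Prop) [DecidablePred P] (Q : Fin m → Prop) [DecidablePred Q] {α β : ℝ}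
    (hβ : 0 ≤ β) (hα : α * m ≤ (Finset.univ.filter Q).card)
    (hP : ∀ j, Q j → β * groupSize S j ≤
      ((Finset.univ.filter (fun i => S.grp i = j)).filter P).card) :
    α * β ≤ ∑ i, agentWeight S i * if P i then 1 else 0 := by
  rw [sum_agentWeight_mul]
  have hgroup : ∀ j : Fin m, (if Q j then β else 0) ≤ (1 / (groupSize S j : ℝ)) *
      ∑ i ∈ Finset.univ.filter (fun i => S.grp i = j), if P i then (1 : ℝ) else 0 := by
    intro j
    have hpos : (0 : ℝ) < groupSize S j := by exact_mod_cast groupSize_pos S j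
    rw [Finset.sum_boole]
    split_ifs with hQ
    · rw [one_div_mul_eq_div, le_div_iff₀ hpos]
      exact hP j hQ
    · positivity
  have hm' : (0 : ℝ) < m := by exact_mod_cast hm
  have hsum := Finset.sum_le_sum fun j (_ : j ∈ Finset.univ) => hgroup j
  rw [← Finset.sum_filter, Finset.sum_const, nsmul_eq_mul] at hsum
  rw [one_div_mul_eq_div, le_div_iff₀ hm']
  nlinarith [mul_le_mul_of_nonneg_right hα hβ]

theorem medianPairMech_approx {m : ℕ} (S : FLSetting 2 m) (x : Fin S.n → ℝ) (y : Fin 2 → ℝ) :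
    SC (maxCost 2) S x (outcome medianPairMech S x) ≤ 9 / 2 * SC (maxCost 2) S x y := by
  have hm : 2 ≤ m := S.hmk
  have hm0 : 0 < m := by omega
  have hmR : (0 : ℝ) < m := by exact_mod_cast hm0
  have hw : ∀ i ∈ (Finset.univ : Finset (Fin S.n)), 0 ≤ agentWeight S i := fun i _ => by
    unfold agentWeight
    positivity
  set l := (m + 1) / 2 with hl
  set θ : ℝ := ((l : ℕ) : ℝ) / (m : ℝ) with hθ
  have hθ0 : 0 ≤ θ := medianPairMech_ratio_nonneg m
  have hθ1 : θ < 1 := medianPairMech_ratio_lt_one hm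
  have hθ2 : 2 / 9 ≤ θ * (1 - θ) := medianPairMech_ratio_mul hm
  have hθm : θ * m = l := div_mul_cancel₀ _ hmR.ne'
  set r : Fin m → ℝ := fun j => medianPairMech.rep m (groupMS S x j) with hr
  set a := kthLeftmost (Finset.univ.val.map r) l with ha
  set b := kthLeftmost (Finset.univ.val.map r) (l + 1) with hb
  have hcard : (Finset.univ : Finset (Fin m)).card = m := by simp
  have hl1 : 1 ≤ l := by omega
  have hlm : l ≤ (Finset.univ : Finset (Fin m)).card := by omega
  have hlm1 : l + 1 ≤ (Finset.univ : Finset (Fin m)).card := by omega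
  have hab : a ≤ b := by
    rw [ha, kthLeftmost_map_le_iff _ hl1 hlm]
    exact (Nat.le_succ l).trans (le_card_filter_le_kthLeftmost (by omega) hlm1)
  have hwa : 2 / 9 ≤ ∑ i, agentWeight S i * if x i ≤ a then 1 else 0 := by
    refine hθ2.trans (mul_le_sum_agentWeight_ite hm0 S _ (fun j => r j ≤ a) (by linarith) ?_ ?_)
    · rw [hθm]
      exact_mod_cast le_card_filter_le_kthLeftmost hl1 hlm
    · intro j hj
      have h := le_card_filter_le_kthLeftmost (x := x)
        (one_le_ceil_ratio_mul hθ1 (groupSize_pos S j)) (ceil_ratio_mul_le hθ0 (groupSize S j))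
      rw [← medianPairMech_rep_groupMS] at h
      refine (Nat.le_ceil _).trans (Nat.cast_le.2 (h.trans (Finset.card_le_card ?_)))
      exact Finset.monotone_filter_right _ fun i _ hi => le_trans hi hj
  have hwb : 2 / 9 ≤ ∑ i, agentWeight S i * if b ≤ x i then 1 else 0 := by
    rw [mul_comm] at hθ2
    refine hθ2.trans (mul_le_sum_agentWeight_ite hm0 S _ (fun j => b ≤ r j) hθ0 ?_ ?_)
    · have h := card_lt_card_filter_kthLeftmost_le_add (x := r) (by omega) hlm1
      rw [hcard, ← hb] at h
      have h' : (m : ℝ) ≤ (Finset.univ.filter fun j => b ≤ r j).card + l := by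
        exact_mod_cast (show m ≤ (Finset.univ.filter fun j => b ≤ r j).card + l by omega)
      linarith
    · intro j hj
      have h := card_lt_card_filter_kthLeftmost_le_add (x := x)
        (one_le_ceil_ratio_mul hθ1 (groupSize_pos S j)) (ceil_ratio_mul_le hθ0 (groupSize S j))
      rw [← medianPairMech_rep_groupMS] at h
      have hsub : ((Finset.univ.filter (fun i => S.grp i = j)).filter
          fun i => medianPairMech.rep m (groupMS S x j) ≤ x i).card ≤
          ((Finset.univ.filter (fun i => S.grp i = j)).filter fun i => b ≤ x i).card :=
        Finset.card_le_card (Finset.monotone_filter_right _ fun i _ hi => le_trans hj hi)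
      have hceil := Nat.ceil_lt_add_one
        (show 0 ≤ (1 - θ) * (groupSize S j : ℝ) from
          mul_nonneg (by linarith) (Nat.cast_nonneg _))
      have h2 : groupSize S j + 1 ≤
          ((Finset.univ.filter (fun i => S.grp i = j)).filter fun i => b ≤ x i).card
            + ⌈(1 - θ) * (groupSize S j : ℝ)⌉₊ := by
        have : groupSize S j = (Finset.univ.filter (fun i => S.grp i = j)).card := rfl
        omega
      have h3 : (groupSize S j : ℝ) + 1 ≤
          (((Finset.univ.filter (fun i => S.grp i = j)).filter fun i => b ≤ x i).card : ℝ)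
            + (⌈(1 - θ) * (groupSize S j : ℝ)⌉₊ : ℝ) := by exact_mod_cast h2
      linarith
  have main := sum_mul_max_abs_le (c := (y 0 + y 1) / 2) hw (sum_agentWeight hm0 S) hab hwb hwa
  have hopt : ∑ i, agentWeight S i * |x i - (y 0 + y 1) / 2|
      ≤ ∑ i, agentWeight S i * maxCost 2 (x i) y :=
    Finset.sum_le_sum fun i hi =>
      mul_le_mul_of_nonneg_left (abs_sub_midpoint_le_maxCost_two _ _) (hw i hi)
  have hout : ∀ i, maxCost 2 (x i) (outcome medianPairMech S x)
      = max |x i - a| |x i - b| := fun i => maxCost_two _ _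
  rw [SC, SC, ← sum_agentWeight_mul S (fun i => maxCost 2 (x i) (outcome medianPairMech S x)),
    ← sum_agentWeight_mul S (fun i => maxCost 2 (x i) y)]
  simp only [hout]
  linarith

/-- In the max-variant with two facilities there is a strategyproof two-phase mechanism
with approximation ratio at most `9/2`. -/
theorem stmt8 :
    ∃ M : TwoPhase 2, M.Valid ∧ Strategyproof (maxCost 2) M ∧
      ∀ (m : ℕ) (S : FLSetting 2 m) (x : Fin S.n → ℝ) (y : Fin 2 → ℝ), Feasible S x y →
        SC (maxCost 2) S x (outcome M S x) ≤ (9 / 2) * SC (maxCost 2) S x y :=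
  ⟨medianPairMech, medianPairMech_valid, medianPairMech_strategyproof,
    fun _ S x y _ => medianPairMech_approx S x y⟩

end
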